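/- Let K ≥ 3 be an integer and suppose x₀ > 0 satisfies x₀ = ((K−2)/2) · φ(x₀)/Φ(x₀). Then −x₀² + (K−2)·log Φ(x₀) > −(K−2)²/(2π) − (K−2)·log 2, and moreover 1 + (K(K−2)/4)·(φ(x₀)/Φ(x₀))² ≤ 1 + K(K−2)/(2π). (The two bounds proved in Corollary 7 (cor_PP), giving the lower bound on the winner-take-all prize pivot.) -/

import Mathlib

/-- The standard normal density `φ(x) = (1/√(2π)) e^{-x²/2}`. -/
noncomputable def stdNormalPDF (x : ℝ) : ℝ := (1 / Real.sqrt (2 * Real.pi)) * Real.exp (-x ^ 2 / 2)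

/-- The standard normal cumulative distribution function `Φ(x) = ∫_{-∞}^x φ(t) dt`. -/
noncomputable def stdNormalCDF (x : ℝ) : ℝ := ∫ t in Set.Iic x, stdNormalPDF t

lemma pdf_eq (x : ℝ) : stdNormalPDF x =
    (1 / Real.sqrt (2 * Real.pi)) * Real.exp (-(1/2) * x ^ 2) := by
  unfold stdNormalPDF
  congr 2
  ring

lemma pdf_integrable : MeasureTheory.Integrable stdNormalPDF := by
  have h := (integrable_exp_neg_mul_sq (b := 1/2) (by norm_num)).const_mul
    (1 / Real.sqrt (2 * Real.pi))
  exact h.congr (Filter.Eventually.of_forall fun x => (pdf_eq x).symm)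

lemma pdf_pos (x : ℝ) : 0 < stdNormalPDF x := by
  unfold stdNormalPDF
  positivity

lemma cdf_zero : stdNormalCDF 0 = 1 / 2 := by
  unfold stdNormalCDF
  have h1 : ∫ t in Set.Iic (0:ℝ), stdNormalPDF t = ∫ t in Set.Iic (0:ℝ), stdNormalPDF (-t) := by
    congr 1
    ext t
    simp [stdNormalPDF]
  rw [h1, integral_comp_neg_Iic (0:ℝ) stdNormalPDF, neg_zero]
  simp_rw [pdf_eq]
  rw [MeasureTheory.integral_const_mul, integral_gaussian_Ioi]
  have h2 : Real.pi / (1 / 2) = 2 * Real.pi := by ring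
  rw [h2]
  have : Real.sqrt (2 * Real.pi) ≠ 0 := by positivity
  field_simp

lemma cdf_half {x : ℝ} (hx : 0 ≤ x) : 1 / 2 ≤ stdNormalCDF x := by
  rw [← cdf_zero]
  unfold stdNormalCDF
  apply MeasureTheory.setIntegral_mono_set pdf_integrable.integrableOn
  · exact Filter.Eventually.of_forall fun t => (pdf_pos t).le
  · exact (Set.Iic_subset_Iic.mpr hx).eventuallyLE

lemma pdf_sq_lt {x : ℝ} (hx : 0 < x) : stdNormalPDF x ^ 2 < 1 / (2 * Real.pi) := by
  unfold stdNormalPDF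
  have hp := Real.pi_pos
  rw [mul_pow, div_pow, Real.sq_sqrt (by positivity), one_pow]
  have h1 : Real.exp (-x ^ 2 / 2) < 1 := by
    rw [Real.exp_lt_one_iff]
    have := pow_pos hx 2
    linarith
  have h2 : Real.exp (-x ^ 2 / 2) ^ 2 < 1 :=
    pow_lt_one₀ (Real.exp_pos _).le h1 (by norm_num)
  have h3 : 0 < 1 / (2 * Real.pi) := by positivity
  nlinarith

lemma ratio_sq_lt {x : ℝ} (hx : 0 < x) :
    (stdNormalPDF x / stdNormalCDF x) ^ 2 < 2 / Real.pi := by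
  have h1 := pdf_sq_lt hx
  have h2 := cdf_half hx.le
  have h3 : 1 / 4 ≤ stdNormalCDF x ^ 2 := by nlinarith
  have hp := Real.pi_pos
  rw [div_pow, div_lt_iff₀ (by linarith)]
  have h4 : 1 / (2 * Real.pi) = 2 / Real.pi * (1 / 4) := by
    field_simp
    norm_num
  have h5 : 2 / Real.pi * (1 / 4) ≤ 2 / Real.pi * stdNormalCDF x ^ 2 :=
    mul_le_mul_of_nonneg_left h3 (by positivity)
  linarith

/-- **The two bounds proved in Corollary 7 (cor_PP).** Let `K ≥ 3` and suppose `x₀ > 0`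
satisfies `x₀ = ((K-2)/2)·φ(x₀)/Φ(x₀)`. Then
`-x₀² + (K-2)·log Φ(x₀) > -(K-2)²/(2π) - (K-2)·log 2`, and
`1 + (K(K-2)/4)·(φ(x₀)/Φ(x₀))² ≤ 1 + K(K-2)/(2π)`. -/
theorem cor_PP_bounds (K : ℕ) (hK : 3 ≤ K) (x₀ : ℝ) (hx₀ : 0 < x₀)
    (heq : x₀ = (((K : ℝ) - 2) / 2) * (stdNormalPDF x₀ / stdNormalCDF x₀)) :
    (-x₀ ^ 2 + ((K : ℝ) - 2) * Real.log (stdNormalCDF x₀)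
        > -((K : ℝ) - 2) ^ 2 / (2 * Real.pi) - ((K : ℝ) - 2) * Real.log 2)
    ∧ 1 + ((K : ℝ) * ((K : ℝ) - 2) / 4) * (stdNormalPDF x₀ / stdNormalCDF x₀) ^ 2
        ≤ 1 + (K : ℝ) * ((K : ℝ) - 2) / (2 * Real.pi) := by
  have hr := ratio_sq_lt hx₀
  have hc := cdf_half hx₀.le
  have hp := Real.pi_pos
  have hK' : (3:ℝ) ≤ K := by exact_mod_cast hK
  constructor
  · have hx2 : x₀ ^ 2 = (((K : ℝ) - 2) / 2) ^ 2 * (stdNormalPDF x₀ / stdNormalCDF x₀) ^ 2 := by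
      rw [← mul_pow, ← heq]
    have hlog : -Real.log 2 ≤ Real.log (stdNormalCDF x₀) := by
      rw [← Real.log_inv]
      apply Real.log_le_log (by norm_num)
      linarith
    have hpos : 0 < (((K : ℝ) - 2) / 2) ^ 2 := by
      apply pow_pos
      linarith
    have hm := mul_lt_mul_of_pos_left hr hpos
    have he : (((K : ℝ) - 2) / 2) ^ 2 * (2 / Real.pi) = ((K : ℝ) - 2) ^ 2 / (2 * Real.pi) := by
      field_simp
    have hl := mul_le_mul_of_nonneg_left hlog (show (0:ℝ) ≤ (K : ℝ) - 2 by linarith)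
    rw [neg_div]
    linarith
  · have hpos : 0 ≤ (K : ℝ) * ((K : ℝ) - 2) / 4 := by
      apply div_nonneg (mul_nonneg _ _) <;> linarith
    have hm := mul_le_mul_of_nonneg_left hr.le hpos
    have he : (K : ℝ) * ((K : ℝ) - 2) / 4 * (2 / Real.pi)
        = (K : ℝ) * ((K : ℝ) - 2) / (2 * Real.pi) := by
      field_simp
      ring
    linarith
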